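/- Let n(t) := (cos t, sin t, 0) and suppose κ² ≥ 3. Consider C¹ maps m : [−1,1] × ℝ → ℝ³ with |m(z,t)| = 1 for all (z,t) and m(z, t+2π) = m(z,t), and the energy E(m) := ∫_{−1}^{1} ∫_{−π}^{π} ( |∂_z m|² + |∂_t m|² + κ² |m(z,t) × n(t)|² ) dt dz. Then E(m) ≥ 4π for every such m, with equality if and only if m(z,t) = n(t) for all (z,t) or m(z,t) = −n(t) for all (z,t); i.e., the normal vector fields ±n are the only global minimizers of E. -/

import Mathlib

open Real Set MeasureTheory

/-- Squared Euclidean norm of a vector in `ℝ³`. -/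
noncomputable def sq3 (v : Fin 3 → ℝ) : ℝ := v 0 ^ 2 + v 1 ^ 2 + v 2 ^ 2

/-- The outward unit normal `n(t) = (cos t, sin t, 0)` to the circular cylinder. -/
noncomputable def nvec (t : ℝ) : Fin 3 → ℝ := ![Real.cos t, Real.sin t, 0]

/-- The micromagnetic energy on the circular cylinder `[−1,1] × S¹`. -/
noncomputable def cylEnergy (κ : ℝ) (m : ℝ → ℝ → Fin 3 → ℝ) : ℝ :=
  ∫ z in (-1 : ℝ)..1, ∫ t in (-π)..π,
    (sq3 (deriv (fun w => m w t) z) + sq3 (deriv (fun s => m z s) t)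
      + κ ^ 2 * sq3 (crossProduct (m z t) (nvec t)))

/-!
Along a circle write a unit field as `u = a n + b τ + c e` in the frame of normal, tangent and
axis. Up to the null Lagrangian `2 (a b)'`, the energy density is
`1 + (a' - 2 b)² + b'² + c'² + (κ² - 4) b² + (κ² - 1) c²`.
The only negative coefficient, at worst `-1`, is absorbed by the Poincaré-Wirtinger inequality
`∫ b² ≤ ∫ b'² + ¼ ∫ (a' - 2 b)²`, in which the last term controls the mean of `b` because `a'` has
mean zero. So every circle has energy at least `2 π`. In the equality case `a' = 2 b` and `c = 0`;
then `a² + b² = 1` forces `∫ b'² = 4 ∫ b²`, so the energy exceeds `2 π` by `κ² ∫ b²`, whence `b = 0`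
and `a = ±1`, with a sign that is constant by connectedness.
-/

open scoped ENNReal Topology

theorem memLp_restrict_Ioc_of_continuousOn {E : Type*} [NormedAddCommGroup E] {f : ℝ → E}
    {a b : ℝ} (p : ℝ≥0∞) (hf : ContinuousOn f (Icc a b)) :
    MemLp f p (volume.restrict (Ioc a b)) := by
  obtain ⟨C, hC⟩ := isCompact_Icc.exists_bound_of_continuousOn hf
  exact MemLp.of_bound
    ((hf.mono Ioc_subset_Icc_self).aestronglyMeasurable measurableSet_Ioc) C
    ((ae_restrict_mem measurableSet_Ioc).mono fun x hx => hC x (Ioc_subset_Icc_self hx))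

theorem eqOn_Icc_of_le_of_integral_le {f g : ℝ → ℝ} {a b : ℝ} (hab : a < b)
    (hf : ContinuousOn f (Icc a b)) (hg : ContinuousOn g (Icc a b))
    (hle : ∀ x ∈ Icc a b, f x ≤ g x) (hint : ∫ x in a..b, g x ≤ ∫ x in a..b, f x) :
    EqOn f g (Icc a b) := by
  intro x hx
  refine (hle x hx).eq_of_not_lt fun hlt => hint.not_gt ?_
  exact intervalIntegral.integral_lt_integral_of_continuousOn_of_le_of_exists_lt hab hf hg
    (fun y hy => hle y (Ioc_subset_Icc_self hy)) ⟨x, hx, hlt⟩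

theorem intervalIntegral_sq_nonneg (f : ℝ → ℝ) {a b : ℝ} (hab : a ≤ b) :
    0 ≤ ∫ x in a..b, f x ^ 2 :=
  intervalIntegral.integral_nonneg hab fun x _ => sq_nonneg (f x)

theorem eq_zero_of_periodic_of_integral_sq_nonpos {f : ℝ → ℝ} {a T : ℝ} (hT : 0 < T)
    (hper : Function.Periodic f T) (hf : Continuous f) (hint : ∫ x in a..a + T, f x ^ 2 ≤ 0)
    (x : ℝ) : f x = 0 := by
  have hint_x : ∫ y in x..x + T, f y ^ 2 ≤ ∫ _ in x..x + T, (0 : ℝ) := by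
    rw [intervalIntegral.integral_zero]
    exact ((hper.comp (· ^ 2)).intervalIntegral_add_eq x a).trans_le hint
  have hsq_zero := eqOn_Icc_of_le_of_integral_le (lt_add_of_pos_right x hT) continuousOn_const
    (hf.pow 2).continuousOn (fun y _ => sq_nonneg (f y)) hint_x
    (left_mem_Icc.2 (le_add_of_nonneg_right hT.le))
  exact pow_eq_zero_iff two_ne_zero |>.1 hsq_zero.symm

theorem periodic_deriv {𝕜 F : Type*} [NontriviallyNormedField 𝕜] [NormedAddCommGroup F]
    [NormedSpace 𝕜 F] {f : 𝕜 → F} {c : 𝕜} (hf : Function.Periodic f c) :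
    Function.Periodic (deriv f) c := fun x => by
  rw [← deriv_comp_add_const, funext hf]

theorem norm_sq_fourierCoeffOn_le {f f' : ℝ → ℂ} {a b : ℝ} (hab : a < b)
    (hf : ∀ x ∈ Icc a b, HasDerivAt f (f' x) x) (hper : f a = f b)
    (hf' : IntervalIntegrable f' volume a b) {n : ℤ} (hn : n ≠ 0) :
    ‖fourierCoeffOn hab f n‖ ^ 2 ≤
      ((b - a) / (2 * π)) ^ 2 * ‖fourierCoeffOn hab f' n‖ ^ 2 := by
  have hcoeff : fourierCoeffOn hab f n =
      (((b - a) / (2 * π) : ℝ) : ℂ) * (fourierCoeffOn hab f' n / (Complex.I * n)) := by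
    rw [fourierCoeffOn_of_hasDerivAt hab hn (by rwa [uIcc_of_le hab.le]) hf', hper, sub_self]
    push_cast
    field_simp
    ring
  have hn_sq : (1 : ℝ) ≤ (n : ℝ) ^ 2 := by
    exact_mod_cast one_le_sq_iff_one_le_abs (n : ℤ) |>.2 (Int.one_le_abs hn)
  rw [hcoeff, norm_mul, mul_pow, norm_div, div_pow, Complex.norm_real, norm_eq_abs, sq_abs,
    norm_mul, Complex.norm_I, one_mul, Complex.norm_intCast, sq_abs]
  gcongr
  exact div_le_self (sq_nonneg _) hn_sq

theorem wirtinger_inequality_complex {f f' : ℝ → ℂ} {a b : ℝ} (hab : a < b)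
    (hf : ∀ x ∈ Icc a b, HasDerivAt f (f' x) x) (hper : f a = f b)
    (hf' : MemLp f' 2 (volume.restrict (Ioc a b))) :
    ∫ x in a..b, ‖f x‖ ^ 2 ≤
      ((b - a) / (2 * π)) ^ 2 * (∫ x in a..b, ‖f' x‖ ^ 2) +
        (b - a)⁻¹ * ‖∫ x in a..b, f x‖ ^ 2 := by
  have hba : 0 < b - a := sub_pos.2 hab
  have hf'_int : IntervalIntegrable f' volume a b :=
    (intervalIntegrable_iff_integrableOn_Ioc_of_le hab.le).2 (hf'.integrable (by norm_num))
  have hf_memLp : MemLp f 2 (volume.restrict (Ioc a b)) :=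
    memLp_restrict_Ioc_of_continuousOn 2 fun x hx => (hf x hx).continuousAt.continuousWithinAt
  have hzero : fourierCoeffOn hab f 0 = (b - a)⁻¹ • ∫ x in a..b, f x := by
    simp [fourierCoeffOn_eq_integral]
  have hsum_f := hasSum_sq_fourierCoeffOn hab hf_memLp
  have hsum_rhs := ((hasSum_sq_fourierCoeffOn hab hf').mul_left (((b - a) / (2 * π)) ^ 2)).add
    (hasSum_ite_eq (0 : ℤ) (‖fourierCoeffOn hab f 0‖ ^ 2))
  have hle := hasSum_le (fun n => ?_) hsum_f hsum_rhs
  · rw [hzero, norm_smul, mul_pow, norm_eq_abs, sq_abs, smul_eq_mul, smul_eq_mul] at hle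
    have hle_mul := mul_le_mul_of_nonneg_left hle hba.le
    rw [mul_inv_cancel_left₀ hba.ne'] at hle_mul
    exact hle_mul.trans_eq (by field_simp)
  · split_ifs with hn
    · rw [hn]
      exact le_add_of_nonneg_left (by positivity)
    · rw [add_zero]
      exact norm_sq_fourierCoeffOn_le hab hf hper hf'_int hn

theorem wirtinger_inequality {f f' : ℝ → ℝ} {a b : ℝ} (hab : a < b)
    (hf : ∀ x ∈ Icc a b, HasDerivAt f (f' x) x) (hper : f a = f b)
    (hf' : MemLp f' 2 (volume.restrict (Ioc a b))) :
    ∫ x in a..b, f x ^ 2 ≤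
      ((b - a) / (2 * π)) ^ 2 * (∫ x in a..b, f' x ^ 2) + (b - a)⁻¹ * (∫ x in a..b, f x) ^ 2 := by
  simpa [intervalIntegral.integral_ofReal] using
    wirtinger_inequality_complex hab (fun x hx => (hf x hx).ofReal_comp)
      (congrArg Complex.ofReal hper) hf'.ofReal

theorem sq_intervalIntegral_le {f : ℝ → ℝ} {a b : ℝ} (hab : a ≤ b)
    (hf : MemLp f 2 (volume.restrict (Ioc a b))) :
    (∫ x in a..b, f x) ^ 2 ≤ (b - a) * ∫ x in a..b, f x ^ 2 := by
  rcases hab.eq_or_lt with rfl | hlt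
  · simp
  have hba : 0 < b - a := sub_pos.2 hlt
  have hjensen : (⨍ x in a..b, f x) ^ 2 ≤ ⨍ x in a..b, f x ^ 2 := by
    rw [uIoc_of_le hab]
    exact (even_two.convexOn_pow (𝕜 := ℝ)).map_set_average_le (continuous_pow 2).continuousOn
      isClosed_univ (by simpa using hlt) (by simp) (by simp) (hf.integrable (by norm_num))
      hf.integrable_sq
  rw [interval_average_eq_div, interval_average_eq_div, div_pow,
    div_le_div_iff₀ (by positivity) hba] at hjensen
  exact le_of_mul_le_mul_right (hjensen.trans_eq (by ring)) hba

theorem deriv_mul_eq_zero_of_eventually_mul_eq_zero {𝕜 : Type*} [NontriviallyNormedField 𝕜]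
    {f g : 𝕜 → 𝕜} {x : 𝕜} (hfg : ∀ᶠ y in 𝓝 x, f y * g y = 0) (hg : ContinuousAt g x) :
    deriv f x * g x = 0 := by
  by_cases hf' : deriv f x = 0
  · rw [hf', zero_mul]
  have hf_ne : ∀ᶠ y in 𝓝[≠] x, f y ≠ 0 :=
    (differentiableAt_of_deriv_ne_zero hf').hasDerivAt.eventually_ne hf'
  have hg_zero : ∀ᶠ y in 𝓝[≠] x, g y = 0 := by
    filter_upwards [hf_ne, hfg.filter_mono nhdsWithin_le_nhds] with y hy hy'
    exact (mul_eq_zero.1 hy').resolve_left hy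
  have hlim : Filter.Tendsto g (𝓝[≠] x) (𝓝 0) :=
    tendsto_const_nhds.congr' (hg_zero.mono fun _ hy => hy.symm)
  rw [tendsto_nhds_unique (hg.tendsto.mono_left nhdsWithin_le_nhds) hlim, mul_zero]

theorem deriv_eq_zero_of_eqOn_Icc_const {E : Type*} [NormedAddCommGroup E] [NormedSpace ℝ E]
    {f : ℝ → E} {a b x : ℝ} {c : E} (hab : a < b) (hx : x ∈ Icc a b)
    (hf : DifferentiableAt ℝ f x) (hconst : ∀ y ∈ Icc a b, f y = c) : deriv f x = 0 := by
  rw [← hf.derivWithin (uniqueDiffOn_Icc hab x hx), derivWithin_congr hconst (hconst x hx),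
    derivWithin_fun_const, Pi.zero_apply]

section PartialDerivatives

variable {𝕜 E F : Type*} [NontriviallyNormedField 𝕜] [NormedAddCommGroup E] [NormedSpace 𝕜 E]
  [NormedAddCommGroup F] [NormedSpace 𝕜 F]

theorem continuous_deriv_snd {f : E → 𝕜 → F} (hf : ContDiff 𝕜 1 (Function.uncurry f)) :
    Continuous fun p : E × 𝕜 => deriv (f p.1) p.2 := by
  have hf_fst : ContDiff 𝕜 1 (Function.uncurry fun (p : E × 𝕜) s => f p.1 s) :=
    hf.comp ((contDiff_fst.comp contDiff_fst).prodMk contDiff_snd)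
  exact (Continuous.fderiv_one hf_fst continuous_snd).clm_apply continuous_const

theorem continuous_deriv_fst {f : 𝕜 → E → F} (hf : ContDiff 𝕜 1 (Function.uncurry f)) :
    Continuous fun p : 𝕜 × E => deriv (fun w => f w p.2) p.1 :=
  (continuous_deriv_snd (f := fun y w => f w y)
    (hf.comp (contDiff_snd.prodMk contDiff_fst))).comp continuous_swap

end PartialDerivatives

/-- Wirtinger controls the oscillation of `g`; since `∫ deriv f = 0`, the mean of `g` is seen by
the integral of `deriv f - c * g`. -/
theorem integral_sq_le_integral_deriv_sq_add {f g : ℝ → ℝ} {a b c : ℝ} (hab : a < b) (hc : c ≠ 0)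
    (hf : ContDiff ℝ 1 f) (hg : ContDiff ℝ 1 g) (hfper : f a = f b) (hgper : g a = g b) :
    ∫ x in a..b, g x ^ 2 ≤ ((b - a) / (2 * π)) ^ 2 * (∫ x in a..b, deriv g x ^ 2) +
      (c ^ 2)⁻¹ * ∫ x in a..b, (deriv f x - c * g x) ^ 2 := by
  have hf' : Continuous (deriv f) := hf.continuous_deriv le_rfl
  have hg' : Continuous (deriv g) := hg.continuous_deriv le_rfl
  have hgc : Continuous g := hg.continuous
  have hba : 0 < b - a := sub_pos.2 hab
  have hwirtinger := wirtinger_inequality hab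
    (fun x _ => ((hg.differentiable one_ne_zero) x).hasDerivAt) hgper
    (memLp_restrict_Ioc_of_continuousOn 2 hg'.continuousOn)
  have hmean : ∫ x in a..b, (deriv f x - c * g x) = -(c * ∫ x in a..b, g x) := by
    rw [intervalIntegral.integral_sub (hf'.intervalIntegrable _ _)
      ((hgc.const_mul c).intervalIntegrable _ _), intervalIntegral.integral_const_mul,
      intervalIntegral.integral_deriv_eq_sub (fun x _ => (hf.differentiable one_ne_zero) x)
      (hf'.intervalIntegrable _ _), hfper, sub_self, zero_sub]
  have hmean_sq : (c * ∫ x in a..b, g x) ^ 2 ≤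
      (b - a) * ∫ x in a..b, (deriv f x - c * g x) ^ 2 := by
    rw [← neg_sq, ← hmean]
    exact sq_intervalIntegral_le hab.le (memLp_restrict_Ioc_of_continuousOn 2
      (hf'.sub (hgc.const_mul c)).continuousOn)
  refine hwirtinger.trans (add_le_add_right ?_ _)
  rw [inv_mul_le_iff₀ hba, mul_left_comm, le_inv_mul_iff₀ (by positivity), ← mul_pow]
  exact hmean_sq

theorem integral_deriv_sq_eq_of_deriv_eq_mul {f g : ℝ → ℝ} {a b c r : ℝ}
    (hf : ContDiff ℝ 1 f) (hg : ContDiff ℝ 1 g) (hfper : f a = f b) (hgper : g a = g b)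
    (hderiv : ∀ x, deriv f x = c * g x) (hcircle : ∀ x, f x ^ 2 + g x ^ 2 = r) :
    ∫ x in a..b, deriv g x ^ 2 = c ^ 2 * ∫ x in a..b, g x ^ 2 := by
  have hfd : Differentiable ℝ f := hf.differentiable one_ne_zero
  have hgd : Differentiable ℝ g := hg.differentiable one_ne_zero
  have hf' : Continuous (deriv f) := hf.continuous_deriv le_rfl
  have hg' : Continuous (deriv g) := hg.continuous_deriv le_rfl
  have hrotation : ∀ x, g x * (deriv g x + c * f x) = 0 := by
    intro x
    have hconst := ((hfd x).hasDerivAt.fun_pow 2).fun_add ((hgd x).hasDerivAt.fun_pow 2)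
    have hzero := (funext hcircle ▸ hconst).unique (hasDerivAt_const x r)
    simp only [hderiv] at hzero
    linear_combination hzero / 2
  have hspeed : ∀ x, deriv g x * (deriv g x + c * f x) = 0 := fun x =>
    deriv_mul_eq_zero_of_eventually_mul_eq_zero (Filter.Eventually.of_forall hrotation)
      (hg'.add (hf.continuous.const_mul c)).continuousAt
  have hparts : ∫ x in a..b, (deriv f x * g x + f x * deriv g x) = 0 := by
    rw [intervalIntegral.integral_deriv_mul_eq_sub (fun x _ => (hfd x).hasDerivAt)
      (fun x _ => (hgd x).hasDerivAt) (hf'.intervalIntegrable _ _) (hg'.intervalIntegrable _ _),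
      hfper, hgper, sub_self]
  have hpointwise : ∀ x, deriv g x ^ 2 =
      c ^ 2 * g x ^ 2 - c * (deriv f x * g x + f x * deriv g x) := by
    intro x
    rw [hderiv]
    linear_combination hspeed x
  simp_rw [hpointwise]
  rw [intervalIntegral.integral_sub, intervalIntegral.integral_const_mul,
    intervalIntegral.integral_const_mul, hparts, mul_zero, sub_zero]
  all_goals
    refine Continuous.intervalIntegrable ?_ _ _
    have := hf.continuous
    have := hg.continuous
    fun_prop

/-- The component of a field `u` along the circle in the direction of the normal `n(t)`. -/
noncomputable def normalPart (u : ℝ → Fin 3 → ℝ) (t : ℝ) : ℝ := u t 0 * cos t + u t 1 * sin t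

/-- The component of a field `u` along the circle in the direction of the unit tangent
`(-sin t, cos t, 0)`. -/
noncomputable def tangentPart (u : ℝ → Fin 3 → ℝ) (t : ℝ) : ℝ := u t 1 * cos t - u t 0 * sin t

/-- The energy of a field `u` along one circle of the cylinder, with anisotropy constant
`K = κ²`. -/
noncomputable def circleEnergy (K : ℝ) (u : ℝ → Fin 3 → ℝ) : ℝ :=
  ∫ t in (-π)..π, (sq3 (deriv u t) + K * sq3 (crossProduct (u t) (nvec t)))

/-- A `C¹` map from the circle to the unit sphere, encoded as a `2π`-periodic map on `ℝ`. -/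
structure IsUnitLoop (u : ℝ → Fin 3 → ℝ) : Prop where
  contDiff : ContDiff ℝ 1 u
  sq3_eq_one : ∀ t, sq3 (u t) = 1
  periodic : Function.Periodic u (2 * π)

section MovingFrame

variable {u : ℝ → Fin 3 → ℝ} {t : ℝ}

theorem sq3_nonneg (v : Fin 3 → ℝ) : 0 ≤ sq3 v := by
  unfold sq3
  positivity

theorem continuous_sq3 : Continuous sq3 := by
  unfold sq3
  fun_prop

theorem sq3_eq_normalPart_sq_add (u : ℝ → Fin 3 → ℝ) (t : ℝ) :
    sq3 (u t) = normalPart u t ^ 2 + tangentPart u t ^ 2 + u t 2 ^ 2 := by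
  simp only [sq3, normalPart, tangentPart]
  linear_combination -(u t 0 ^ 2 + u t 1 ^ 2) * sin_sq_add_cos_sq t

theorem sq3_crossProduct_nvec (u : ℝ → Fin 3 → ℝ) (t : ℝ) :
    sq3 (crossProduct (u t) (nvec t)) = tangentPart u t ^ 2 + u t 2 ^ 2 := by
  simp only [cross_apply, sq3, nvec, tangentPart, Matrix.cons_val]
  linear_combination u t 2 ^ 2 * sin_sq_add_cos_sq t

theorem eq_nvec_iff_normalPart_eq_one (hu : sq3 (u t) = 1) :
    u t = nvec t ↔ normalPart u t = 1 := by
  constructor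
  · intro h
    simp only [normalPart, h, nvec, Matrix.cons_val]
    linear_combination sin_sq_add_cos_sq t
  · intro h
    rw [sq3_eq_normalPart_sq_add, h] at hu
    have htangent : tangentPart u t = 0 := by nlinarith [sq_nonneg (u t 2)]
    have hvertical : u t 2 = 0 := by nlinarith [sq_nonneg (tangentPart u t)]
    simp only [normalPart, tangentPart] at h htangent
    ext i
    fin_cases i
    · simp only [nvec, Fin.zero_eta, Matrix.cons_val]
      linear_combination cos t * h - sin t * htangent - u t 0 * sin_sq_add_cos_sq t
    · simp only [nvec, Fin.mk_one, Matrix.cons_val]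
      linear_combination sin t * h + cos t * htangent - u t 1 * sin_sq_add_cos_sq t
    · exact hvertical

theorem eq_neg_nvec_iff_normalPart_eq_neg_one (hu : sq3 (u t) = 1) :
    u t = -nvec t ↔ normalPart u t = -1 := by
  have hneg : sq3 ((-u) t) = 1 := by simpa [sq3] using hu
  have hpart : normalPart (-u) t = -normalPart u t := by
    simp only [normalPart, Pi.neg_apply]
    ring
  rw [← neg_eq_iff_eq_neg, ← Pi.neg_apply, eq_nvec_iff_normalPart_eq_one hneg, hpart,
    neg_eq_iff_eq_neg]

theorem hasDerivAt_normalPart (hu : DifferentiableAt ℝ u t) :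
    HasDerivAt (normalPart u) (normalPart (deriv u) t + tangentPart u t) t := by
  have hcomp := hasDerivAt_pi.1 hu.hasDerivAt
  refine (((hcomp 0).fun_mul (hasDerivAt_cos t)).fun_add
    ((hcomp 1).fun_mul (hasDerivAt_sin t))).congr_deriv ?_
  simp only [normalPart, tangentPart]
  ring

theorem hasDerivAt_tangentPart (hu : DifferentiableAt ℝ u t) :
    HasDerivAt (tangentPart u) (tangentPart (deriv u) t - normalPart u t) t := by
  have hcomp := hasDerivAt_pi.1 hu.hasDerivAt
  refine (((hcomp 1).fun_mul (hasDerivAt_cos t)).fun_sub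
    ((hcomp 0).fun_mul (hasDerivAt_sin t))).congr_deriv ?_
  simp only [normalPart, tangentPart]
  ring

theorem contDiff_normalPart {n : WithTop ℕ∞} (hu : ContDiff ℝ n u) :
    ContDiff ℝ n (normalPart u) := by
  have hcomp := contDiff_pi.1 hu
  exact ((hcomp 0).mul contDiff_cos).add ((hcomp 1).mul contDiff_sin)

theorem contDiff_tangentPart {n : WithTop ℕ∞} (hu : ContDiff ℝ n u) :
    ContDiff ℝ n (tangentPart u) := by
  have hcomp := contDiff_pi.1 hu
  exact ((hcomp 1).mul contDiff_cos).sub ((hcomp 0).mul contDiff_sin)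

theorem periodic_normalPart (hu : Function.Periodic u (2 * π)) :
    Function.Periodic (normalPart u) (2 * π) := fun t => by
  simp only [normalPart, hu t, cos_add_two_pi, sin_add_two_pi]

theorem periodic_tangentPart (hu : Function.Periodic u (2 * π)) :
    Function.Periodic (tangentPart u) (2 * π) := fun t => by
  simp only [tangentPart, hu t, cos_add_two_pi, sin_add_two_pi]

theorem circleEnergy_density_eq (K : ℝ) (hu : DifferentiableAt ℝ u t) (hunit : sq3 (u t) = 1) :
    sq3 (deriv u t) + K * sq3 (crossProduct (u t) (nvec t)) =
      1 + (deriv (normalPart u) t - 2 * tangentPart u t) ^ 2 + deriv (tangentPart u) t ^ 2 +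
        deriv (fun s => u s 2) t ^ 2 + (K - 4) * tangentPart u t ^ 2 + (K - 1) * u t 2 ^ 2 +
        2 * (deriv (normalPart u) t * tangentPart u t +
          normalPart u t * deriv (tangentPart u) t) := by
  have hvertical : deriv (fun s => u s 2) t = deriv u t 2 :=
    (hasDerivAt_pi.1 hu.hasDerivAt 2).deriv
  rw [sq3_crossProduct_nvec, sq3_eq_normalPart_sq_add (deriv u), hvertical,
    (hasDerivAt_normalPart hu).deriv, (hasDerivAt_tangentPart hu).deriv]
  rw [sq3_eq_normalPart_sq_add] at hunit
  linear_combination hunit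

end MovingFrame

theorem neg_pi_add_two_pi : -π + 2 * π = π := by ring

namespace IsUnitLoop

variable {u : ℝ → Fin 3 → ℝ}

theorem contDiff_apply (hu : IsUnitLoop u) (i : Fin 3) : ContDiff ℝ 1 fun t => u t i :=
  contDiff_pi.1 hu.contDiff i

theorem normalPart_neg_pi (hu : IsUnitLoop u) : normalPart u (-π) = normalPart u π := by
  rw [← periodic_normalPart hu.periodic (-π), neg_pi_add_two_pi]

theorem tangentPart_neg_pi (hu : IsUnitLoop u) : tangentPart u (-π) = tangentPart u π := by
  rw [← periodic_tangentPart hu.periodic (-π), neg_pi_add_two_pi]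

theorem circleEnergy_eq (hu : IsUnitLoop u) (K : ℝ) :
    circleEnergy K u = 2 * π +
      (∫ t in (-π)..π, (deriv (normalPart u) t - 2 * tangentPart u t) ^ 2) +
      (∫ t in (-π)..π, deriv (tangentPart u) t ^ 2) +
      (∫ t in (-π)..π, deriv (fun s => u s 2) t ^ 2) +
      (K - 4) * (∫ t in (-π)..π, tangentPart u t ^ 2) +
      (K - 1) * ∫ t in (-π)..π, u t 2 ^ 2 := by
  have ha := contDiff_normalPart hu.contDiff
  have hb := contDiff_tangentPart hu.contDiff
  have hc := hu.contDiff_apply 2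
  have ha'_cont := ha.continuous_deriv le_rfl
  have hb'_cont := hb.continuous_deriv le_rfl
  have hnull : ∫ t in (-π)..π, (deriv (normalPart u) t * tangentPart u t +
      normalPart u t * deriv (tangentPart u) t) = 0 := by
    rw [intervalIntegral.integral_deriv_mul_eq_sub
      (fun t _ => (ha.differentiable one_ne_zero t).hasDerivAt)
      (fun t _ => (hb.differentiable one_ne_zero t).hasDerivAt)
      (ha'_cont.intervalIntegrable _ _) (hb'_cont.intervalIntegrable _ _),
      hu.normalPart_neg_pi, hu.tangentPart_neg_pi, sub_self]
  have hvolume : ∫ _ in (-π)..π, (1 : ℝ) = 2 * π := by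
    rw [intervalIntegral.integral_const, smul_eq_mul]
    ring
  rw [circleEnergy, intervalIntegral.integral_congr fun t _ => circleEnergy_density_eq K
    (hu.contDiff.differentiable one_ne_zero t) (hu.sq3_eq_one t)]
  simp only [← intervalIntegral.integral_const_mul]
  rw [intervalIntegral.integral_add, intervalIntegral.integral_add, intervalIntegral.integral_add,
    intervalIntegral.integral_add, intervalIntegral.integral_add, intervalIntegral.integral_add,
    intervalIntegral.integral_const_mul 2, hnull, hvolume, mul_zero, add_zero]
  all_goals
    refine Continuous.intervalIntegrable ?_ _ _
    fun_prop

theorem add_integral_sq_le_circleEnergy (hu : IsUnitLoop u) {K : ℝ} (hK : 3 ≤ K) :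
    2 * π + 3 / 4 * (∫ t in (-π)..π, (deriv (normalPart u) t - 2 * tangentPart u t) ^ 2) +
      2 * (∫ t in (-π)..π, u t 2 ^ 2) ≤ circleEnergy K u := by
  have hpi : -π ≤ π := neg_le_self pi_pos.le
  have hpoincare := integral_sq_le_integral_deriv_sq_add (c := 2) (neg_lt_self pi_pos) two_ne_zero
    (contDiff_normalPart hu.contDiff) (contDiff_tangentPart hu.contDiff)
    hu.normalPart_neg_pi hu.tangentPart_neg_pi
  rw [sub_neg_eq_add, ← two_mul, div_self two_pi_pos.ne', one_pow, one_mul] at hpoincare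
  have hc' := intervalIntegral_sq_nonneg (deriv fun s => u s 2) hpi
  have hb := mul_nonneg (sub_nonneg.2 hK) (intervalIntegral_sq_nonneg (tangentPart u) hpi)
  have hc := mul_nonneg (sub_nonneg.2 hK) (intervalIntegral_sq_nonneg (fun t => u t 2) hpi)
  rw [hu.circleEnergy_eq]
  linarith

theorem two_pi_le_circleEnergy (hu : IsUnitLoop u) {K : ℝ} (hK : 3 ≤ K) :
    2 * π ≤ circleEnergy K u := by
  have hpi : -π ≤ π := neg_le_self pi_pos.le
  have hac := intervalIntegral_sq_nonneg
    (fun t => deriv (normalPart u) t - 2 * tangentPart u t) hpi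
  have hc := intervalIntegral_sq_nonneg (fun t => u t 2) hpi
  linarith [hu.add_integral_sq_le_circleEnergy hK]

theorem deriv_normalPart_eq_of_circleEnergy_eq (hu : IsUnitLoop u) {K : ℝ} (hK : 3 ≤ K)
    (hE : circleEnergy K u = 2 * π) (t : ℝ) :
    deriv (normalPart u) t = 2 * tangentPart u t := by
  have hcont : Continuous fun t => deriv (normalPart u) t - 2 * tangentPart u t :=
    ((contDiff_normalPart hu.contDiff).continuous_deriv le_rfl).sub
      ((contDiff_tangentPart hu.contDiff).continuous.const_mul 2)
  have hper : Function.Periodic (fun t => deriv (normalPart u) t - 2 * tangentPart u t) (2 * π) :=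
    fun t => by
      simp only [periodic_deriv (periodic_normalPart hu.periodic) t,
        periodic_tangentPart hu.periodic t]
  refine sub_eq_zero.1
    (eq_zero_of_periodic_of_integral_sq_nonpos (a := -π) two_pi_pos hper hcont ?_ t)
  rw [neg_pi_add_two_pi]
  linarith [hu.add_integral_sq_le_circleEnergy hK,
    intervalIntegral_sq_nonneg (fun t => u t 2) (neg_le_self pi_pos.le)]

theorem vertical_eq_zero_of_circleEnergy_eq (hu : IsUnitLoop u) {K : ℝ} (hK : 3 ≤ K)
    (hE : circleEnergy K u = 2 * π) (t : ℝ) : u t 2 = 0 := by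
  refine eq_zero_of_periodic_of_integral_sq_nonpos (f := fun t => u t 2) (a := -π) two_pi_pos
    (hu.periodic.comp (· 2)) (hu.contDiff_apply 2).continuous ?_ t
  rw [neg_pi_add_two_pi]
  have hac := intervalIntegral_sq_nonneg
    (fun t => deriv (normalPart u) t - 2 * tangentPart u t) (neg_le_self pi_pos.le)
  linarith [hu.add_integral_sq_le_circleEnergy hK]

theorem tangentPart_eq_zero_of_circleEnergy_eq (hu : IsUnitLoop u) {K : ℝ} (hK : 3 ≤ K)
    (hE : circleEnergy K u = 2 * π) (t : ℝ) : tangentPart u t = 0 := by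
  have ha' := hu.deriv_normalPart_eq_of_circleEnergy_eq hK hE
  have hc := hu.vertical_eq_zero_of_circleEnergy_eq hK hE
  have hcircle : ∀ t, normalPart u t ^ 2 + tangentPart u t ^ 2 = 1 := fun t => by
    have hunit := hu.sq3_eq_one t
    rwa [sq3_eq_normalPart_sq_add, hc, zero_pow two_ne_zero, add_zero] at hunit
  have hb' := integral_deriv_sq_eq_of_deriv_eq_mul (contDiff_normalPart hu.contDiff)
    (contDiff_tangentPart hu.contDiff) hu.normalPart_neg_pi hu.tangentPart_neg_pi ha' hcircle
  have hbalance := hu.circleEnergy_eq K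
  simp only [hE, ha', hc, hb', sub_self, deriv_const, ne_eq, OfNat.ofNat_ne_zero,
    not_false_eq_true, zero_pow, intervalIntegral.integral_zero, mul_zero, add_zero] at hbalance
  have hK_mul : K * ∫ t in (-π)..π, tangentPart u t ^ 2 = 0 := by linarith
  refine eq_zero_of_periodic_of_integral_sq_nonpos (a := -π) two_pi_pos
    (periodic_tangentPart hu.periodic) (contDiff_tangentPart hu.contDiff).continuous ?_ t
  rw [neg_pi_add_two_pi]
  exact ((mul_eq_zero.1 hK_mul).resolve_left (by linarith)).le

theorem circleEnergy_eq_two_pi_of_normalPart_sq_eq_one (hu : IsUnitLoop u) (K : ℝ)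
    (ha : ∀ t, normalPart u t ^ 2 = 1) : circleEnergy K u = 2 * π := by
  have hbc : ∀ t, tangentPart u t = 0 ∧ u t 2 = 0 := fun t => by
    have hunit := hu.sq3_eq_one t
    rw [sq3_eq_normalPart_sq_add, ha] at hunit
    constructor <;> nlinarith [sq_nonneg (tangentPart u t), sq_nonneg (u t 2)]
  have ha' : deriv (normalPart u) = 0 := by
    have hsign := isPreconnected_univ.eq_one_or_eq_neg_one_of_sq_eq
      (contDiff_normalPart hu.contDiff).continuous.continuousOn fun t _ => ha t
    simp only [eqOn_univ] at hsign
    rcases hsign with h | h <;> rw [h] <;> ext t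
    · exact deriv_const t 1
    · exact deriv_const t (-1)
  simp [hu.circleEnergy_eq, ha', funext fun t => (hbc t).1, fun t => (hbc t).2]

theorem circleEnergy_eq_two_pi_iff (hu : IsUnitLoop u) {K : ℝ} (hK : 3 ≤ K) :
    circleEnergy K u = 2 * π ↔ ∀ t, normalPart u t ^ 2 = 1 := by
  refine ⟨fun hE t => ?_, hu.circleEnergy_eq_two_pi_of_normalPart_sq_eq_one K⟩
  simpa [sq3_eq_normalPart_sq_add, hu.tangentPart_eq_zero_of_circleEnergy_eq hK hE,
    hu.vertical_eq_zero_of_circleEnergy_eq hK hE] using hu.sq3_eq_one t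

end IsUnitLoop

section Cylinder

variable {m : ℝ → ℝ → Fin 3 → ℝ}

theorem continuous_circleEnergy_density (hm : ContDiff ℝ 1 (Function.uncurry m)) (K : ℝ) :
    Continuous fun p : ℝ × ℝ =>
      sq3 (deriv (m p.1) p.2) + K * sq3 (crossProduct (m p.1 p.2) (nvec p.2)) := by
  have hcoord := continuous_pi_iff.1 hm.continuous
  refine (continuous_sq3.comp (continuous_deriv_snd hm)).add (continuous_const.mul ?_)
  simp only [sq3_crossProduct_nvec, tangentPart]
  exact ((((hcoord 1).mul (continuous_cos.comp continuous_snd)).sub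
    ((hcoord 0).mul (continuous_sin.comp continuous_snd))).pow 2).add ((hcoord 2).pow 2)

theorem continuous_circleEnergy (hm : ContDiff ℝ 1 (Function.uncurry m)) (K : ℝ) :
    Continuous fun z => circleEnergy K (m z) :=
  intervalIntegral.continuous_parametric_intervalIntegral_of_continuous'
    (continuous_circleEnergy_density hm K) _ _

theorem cylEnergy_eq_add (hm : ContDiff ℝ 1 (Function.uncurry m)) (κ : ℝ) :
    cylEnergy κ m = (∫ z in (-1 : ℝ)..1, ∫ t in (-π)..π, sq3 (deriv (fun w => m w t) z)) +
      ∫ z in (-1 : ℝ)..1, circleEnergy (κ ^ 2) (m z) := by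
  have haxial : Continuous fun p : ℝ × ℝ => sq3 (deriv (fun w => m w p.2) p.1) :=
    continuous_sq3.comp (continuous_deriv_fst hm)
  have hslice : ∀ z, ∫ t in (-π)..π, (sq3 (deriv (fun w => m w t) z) + sq3 (deriv (m z) t)
      + κ ^ 2 * sq3 (crossProduct (m z t) (nvec t))) =
      (∫ t in (-π)..π, sq3 (deriv (fun w => m w t) z)) + circleEnergy (κ ^ 2) (m z) := fun z => by
    simp_rw [add_assoc]
    exact intervalIntegral.integral_add
      ((haxial.comp (Continuous.prodMk_right z)).intervalIntegrable _ _)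
      (((continuous_circleEnergy_density hm _).comp
        (Continuous.prodMk_right z)).intervalIntegrable _ _)
  simp_rw [cylEnergy, hslice]
  exact intervalIntegral.integral_add
    ((intervalIntegral.continuous_parametric_intervalIntegral_of_continuous'
      haxial _ _).intervalIntegrable _ _)
    ((continuous_circleEnergy hm _).intervalIntegrable _ _)

theorem integral_circleEnergy_le_cylEnergy (hm : ContDiff ℝ 1 (Function.uncurry m)) (κ : ℝ) :
    ∫ z in (-1 : ℝ)..1, circleEnergy (κ ^ 2) (m z) ≤ cylEnergy κ m := by
  rw [cylEnergy_eq_add hm]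
  exact le_add_of_nonneg_left (intervalIntegral.integral_nonneg (by norm_num) fun z _ =>
    intervalIntegral.integral_nonneg (neg_le_self pi_pos.le) fun t _ => sq3_nonneg _)

theorem cylEnergy_eq_integral_circleEnergy (hm : ContDiff ℝ 1 (Function.uncurry m)) (κ : ℝ)
    {u : ℝ → Fin 3 → ℝ} (hu : ∀ z ∈ Icc (-1 : ℝ) 1, ∀ t, m z t = u t) :
    cylEnergy κ m = ∫ z in (-1 : ℝ)..1, circleEnergy (κ ^ 2) (m z) := by
  have hderiv : ∀ z ∈ Icc (-1 : ℝ) 1, ∀ t, deriv (fun w => m w t) z = 0 := fun z hz t =>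
    deriv_eq_zero_of_eqOn_Icc_const (by norm_num) hz
      (((hm.comp (contDiff_prodMk_left t)).differentiable one_ne_zero) z) fun w hw => hu w hw t
  rw [cylEnergy_eq_add hm, add_eq_right]
  refine intervalIntegral.integral_zero_ae (.of_forall fun z hz => ?_)
  rw [uIoc_of_le (by norm_num)] at hz
  simp [hderiv z (Ioc_subset_Icc_self hz), sq3]

theorem forall_normalPart_sq_eq_one_iff {S : Set ℝ} (hS : IsPreconnected S)
    (hm : Continuous (Function.uncurry m)) (hunit : ∀ z t, sq3 (m z t) = 1) :
    (∀ z ∈ S, ∀ t, normalPart (m z) t ^ 2 = 1) ↔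
      (∀ z ∈ S, ∀ t, m z t = nvec t) ∨ ∀ z ∈ S, ∀ t, m z t = -nvec t := by
  simp only [eq_nvec_iff_normalPart_eq_one (hunit _ _),
    eq_neg_nvec_iff_normalPart_eq_neg_one (hunit _ _)]
  constructor
  · intro hsq
    have hcoord := continuous_pi_iff.1 hm
    have hcont : Continuous fun p : ℝ × ℝ => normalPart (m p.1) p.2 :=
      ((hcoord 0).mul (continuous_cos.comp continuous_snd)).add
        ((hcoord 1).mul (continuous_sin.comp continuous_snd))
    exact ((hS.prod isPreconnected_univ).eq_one_or_eq_neg_one_of_sq_eq hcont.continuousOn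
      fun p hp => hsq p.1 hp.1 p.2).imp (fun h z hz t => h (mk_mem_prod hz (mem_univ t)))
      fun h z hz t => h (mk_mem_prod hz (mem_univ t))
  · rintro (h | h) z hz t <;> simp [h z hz t]

theorem integral_two_pi : ∫ _ in (-1 : ℝ)..1, 2 * π = 4 * π := by
  rw [intervalIntegral.integral_const, smul_eq_mul]
  ring

theorem four_pi_le_cylEnergy (hm : ContDiff ℝ 1 (Function.uncurry m))
    (hloop : ∀ z, IsUnitLoop (m z)) {κ : ℝ} (hκ : 3 ≤ κ ^ 2) : 4 * π ≤ cylEnergy κ m :=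
  calc 4 * π = ∫ _ in (-1 : ℝ)..1, 2 * π := integral_two_pi.symm
    _ ≤ ∫ z in (-1 : ℝ)..1, circleEnergy (κ ^ 2) (m z) :=
      intervalIntegral.integral_mono_on (by norm_num) intervalIntegrable_const
        ((continuous_circleEnergy hm _).intervalIntegrable _ _)
        fun z _ => (hloop z).two_pi_le_circleEnergy hκ
    _ ≤ cylEnergy κ m := integral_circleEnergy_le_cylEnergy hm κ

theorem circleEnergy_eq_two_pi_of_cylEnergy_eq (hm : ContDiff ℝ 1 (Function.uncurry m))
    (hloop : ∀ z, IsUnitLoop (m z)) {κ : ℝ} (hκ : 3 ≤ κ ^ 2) (hE : cylEnergy κ m = 4 * π)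
    {z : ℝ} (hz : z ∈ Icc (-1 : ℝ) 1) : circleEnergy (κ ^ 2) (m z) = 2 * π := by
  refine (eqOn_Icc_of_le_of_integral_le (by norm_num) continuousOn_const
    (continuous_circleEnergy hm (κ ^ 2)).continuousOn
    (fun z _ => (hloop z).two_pi_le_circleEnergy hκ) ?_ hz).symm
  rw [integral_two_pi, ← hE]
  exact integral_circleEnergy_le_cylEnergy hm κ

theorem cylEnergy_eq_four_pi_iff (hm : ContDiff ℝ 1 (Function.uncurry m))
    (hloop : ∀ z, IsUnitLoop (m z)) {κ : ℝ} (hκ : 3 ≤ κ ^ 2) :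
    cylEnergy κ m = 4 * π ↔
      ∀ z ∈ Icc (-1 : ℝ) 1, ∀ t, normalPart (m z) t ^ 2 = 1 := by
  refine ⟨fun hE z hz => ((hloop z).circleEnergy_eq_two_pi_iff hκ).1
    (circleEnergy_eq_two_pi_of_cylEnergy_eq hm hloop hκ hE hz), fun hsq => ?_⟩
  obtain ⟨u, hu⟩ : ∃ u : ℝ → Fin 3 → ℝ, ∀ z ∈ Icc (-1 : ℝ) 1, ∀ t, m z t = u t :=
    ((forall_normalPart_sq_eq_one_iff isPreconnected_Icc hm.continuous
      fun z => (hloop z).sq3_eq_one).1 hsq).elim (⟨_, ·⟩) (⟨_, ·⟩)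
  rw [cylEnergy_eq_integral_circleEnergy hm κ hu, ← integral_two_pi]
  refine intervalIntegral.integral_congr fun z hz => ?_
  rw [uIcc_of_le (by norm_num)] at hz
  exact ((hloop z).circleEnergy_eq_two_pi_iff hκ).2 (hsq z hz)

end Cylinder

/-- **Micromagnetic ground states in thin cylindrical shells for `κ² ≥ 3`**:
`E(m) ≥ 4π` for every `C¹` unit-norm `2π`-periodic-in-`t` map `m`, with equality
if and only if `m = n` or `m = −n`; i.e., the normal vector fields `±n` are the
only global minimizers. -/
theorem normal_fields_only_global_minimizers
    (κ : ℝ) (hκ : 3 ≤ κ ^ 2)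
    (m : ℝ → ℝ → Fin 3 → ℝ)
    (hsm : ContDiff ℝ 1 (fun p : ℝ × ℝ => m p.1 p.2))
    (hunit : ∀ z t : ℝ, sq3 (m z t) = 1)
    (hper : ∀ z t : ℝ, m z (t + 2 * π) = m z t) :
    4 * π ≤ cylEnergy κ m ∧
    (cylEnergy κ m = 4 * π ↔
      ((∀ z ∈ Icc (-1 : ℝ) 1, ∀ t : ℝ, m z t = nvec t) ∨
       (∀ z ∈ Icc (-1 : ℝ) 1, ∀ t : ℝ, m z t = -nvec t))) := by
  have hloop : ∀ z, IsUnitLoop (m z) := fun z =>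
    ⟨hsm.comp (contDiff_prodMk_right z), hunit z, hper z⟩
  exact ⟨four_pi_le_cylEnergy hsm hloop hκ,
    (cylEnergy_eq_four_pi_iff hsm hloop hκ).trans
      (forall_normalPart_sq_eq_one_iff isPreconnected_Icc hsm.continuous hunit)⟩
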